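/- arXiv:1403.1468 — 2 statements merged into one kernel-verified Lean document; each statement's English description precedes it below -/
import Mathlib

section
/- Let G be a finite simple graph with n vertices, ε edges, and independence number α(G). Then S*(G) = n + ε − α(G), where S*(G) is the minimum total storage over all edge-decompositions of G into stars. -/
open Classical

noncomputable section

variable {V : Type*}

/-- An edge-decomposition of `G` into stars: a finite collection of stars, each given by
a designated centre together with a nonempty set of edges of `G` all incident with the
centre, such that the edge sets are pairwise disjoint and cover the edge set of `G`. -/
structure StarDecomposition (G : SimpleGraph V) where
  stars : Finset (V × Finset (Sym2 V))
  star_nonempty : ∀ p ∈ stars, p.2.Nonempty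
  centre_mem : ∀ p ∈ stars, ∀ e ∈ p.2, p.1 ∈ e
  edges_sub : ∀ p ∈ stars, ∀ e ∈ p.2, e ∈ G.edgeSet
  disj : ∀ p ∈ stars, ∀ q ∈ stars, p ≠ q → Disjoint p.2 q.2
  covers : ∀ e ∈ G.edgeSet, ∃ p ∈ stars, e ∈ p.2

namespace StarDecomposition

variable {G : SimpleGraph V}

/-- The storage of a vertex `u`: the number of stars of the decomposition that contain
`u` as a vertex (as centre or leaf). -/
def storage (D : StarDecomposition G) (u : V) : ℕ :=
  (D.stars.filter fun p => ∃ e ∈ p.2, u ∈ e).card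

/-- The number of stars of the decomposition in which `u` is a leaf
(a vertex other than the centre). -/
def leafCount (D : StarDecomposition G) (u : V) : ℕ :=
  (D.stars.filter fun p => u ≠ p.1 ∧ ∃ e ∈ p.2, u ∈ e).card

/-- The total storage of a decomposition: the sum of the storages of all vertices. -/
def totalStorage [Fintype V] (D : StarDecomposition G) : ℕ :=
  ∑ u, D.storage u

end StarDecomposition

/-- `S*(G)`: the minimum total storage over all edge-decompositions of `G` into stars. -/
def SStar [Fintype V] (G : SimpleGraph V) : ℕ :=
  sInf {S | ∃ D : StarDecomposition G, D.totalStorage = S}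

/-- `S_max*(G)`: the minimum, over all edge-decompositions of `G` into stars, of the
maximum storage of a vertex. -/
def SmaxStar (G : SimpleGraph V) : ℕ :=
  sInf {k | ∃ D : StarDecomposition G, ∀ v, D.storage v ≤ k}

/-- The minimum number of stars over all edge-decompositions of `G` into stars. -/
def minStars (G : SimpleGraph V) : ℕ :=
  sInf {k | ∃ D : StarDecomposition G, D.stars.card = k}

/-- An orientation of `G`: each edge is assigned a head (one of its two endpoints);
the other endpoint is its tail. -/
structure EdgeOrientation (G : SimpleGraph V) where
  head : Sym2 V → V
  head_mem : ∀ e ∈ G.edgeSet, head e ∈ e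

namespace EdgeOrientation

variable {G : SimpleGraph V}

/-- The indegree of `v`: the number of edges whose head is `v`. -/
def indeg (o : EdgeOrientation G) (v : V) : ℕ :=
  {e | e ∈ G.edgeSet ∧ o.head e = v}.ncard

/-- The outdegree of `v`: the number of edges incident with `v` whose head is not `v`. -/
def outdeg (o : EdgeOrientation G) (v : V) : ℕ :=
  {e | e ∈ G.edgeSet ∧ v ∈ e ∧ o.head e ≠ v}.ncard

end EdgeOrientation

/-- `MMI(G)`: the minimum over all orientations of `G` of the maximum indegree. -/
def MMI (G : SimpleGraph V) : ℕ :=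
  sInf {k | ∃ o : EdgeOrientation G, ∀ v, o.indeg v ≤ k}

/-- `MMO(G)`: the minimum over all orientations of `G` of the maximum outdegree. -/
def MMO (G : SimpleGraph V) : ℕ :=
  sInf {k | ∃ o : EdgeOrientation G, ∀ v, o.outdeg v ≤ k}

/-- The independence number `α(G)`: the maximum size of a set of vertices no two of
which are adjacent. -/
def indepNum (G : SimpleGraph V) : ℕ :=
  sSup {k | ∃ s : Finset V, (∀ u ∈ s, ∀ v ∈ s, ¬ G.Adj u v) ∧ s.card = k}

end

/-!
A star with `k` edges has `k + 1` vertices, so counting incidences between vertices and stars shows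
that the total storage of a decomposition is `ε` plus its number of stars. It remains to minimise
the number of stars. The centres form a vertex cover; conversely, directing each edge to an endpoint
in a given vertex cover and grouping the edges by head uses at most one star per cover vertex. So
the minimum number of stars is the vertex cover number, which is `n - α(G)` by Gallai's identity.
-/

section Sym2

open Finset

variable {V : Type*}

theorem card_biUnion_toFinset_of_forall_mem {E : Finset (Sym2 V)} {c : V} (hne : E.Nonempty)
    (hc : ∀ e ∈ E, c ∈ e) (hE : ∀ e ∈ E, ¬ e.IsDiag) :
    #(E.biUnion Sym2.toFinset) = #E + 1 := by
  have c_mem : c ∈ E.biUnion Sym2.toFinset := by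
    obtain ⟨e, he⟩ := hne
    exact mem_biUnion.2 ⟨e, he, Sym2.mem_toFinset.2 (hc e he)⟩
  have image_leaves : ((E.biUnion Sym2.toFinset).erase c).image (s(c, ·)) = E := by
    ext e
    simp only [mem_image, mem_erase, mem_biUnion, Sym2.mem_toFinset]
    constructor
    · rintro ⟨u, ⟨huc, e, he, hu⟩, rfl⟩
      rwa [← (Sym2.mem_and_mem_iff huc.symm).1 ⟨hc e he, hu⟩]
    · intro he
      obtain ⟨u, rfl⟩ := hc e he
      exact ⟨u, ⟨fun huc => hE _ he huc.symm, _, he, Sym2.mem_mk_right c u⟩, rfl⟩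
  rw [← card_erase_add_one c_mem, ← image_leaves,
    card_image_of_injective _ fun _ _ => Sym2.congr_right.1, image_leaves]

end Sym2

section VertexCover

variable {V : Type*}

theorem indepNum_eq_simpleGraph_indepNum (G : SimpleGraph V) : indepNum G = G.indepNum := by
  have forall_iff (s : Finset V) :
      (∀ u ∈ s, ∀ v ∈ s, ¬ G.Adj u v) ↔ G.IsIndepSet s :=
    ⟨fun h u hu v hv _ => h u hu v hv,
      fun h u hu v hv huv => h hu hv huv.ne huv⟩
  simp only [indepNum, SimpleGraph.indepNum, SimpleGraph.isNIndepSet_iff, forall_iff]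

theorem vertexCoverNum_add_indepNum [Finite V] (G : SimpleGraph V) :
    G.vertexCoverNum + G.indepNum = Nat.card V := by
  apply le_antisymm
  · obtain ⟨s, hs⟩ := G.exists_isNIndepSet_indepNum
    have cover_compl : G.IsVertexCover (s : Set V)ᶜ :=
      SimpleGraph.isVertexCover_compl.2 hs.isIndepSet
    calc G.vertexCoverNum + G.indepNum
        ≤ (s : Set V)ᶜ.encard + (s : Set V).encard := by
          rw [Set.encard_coe_eq_coe_finsetCard, hs.card_eq]
          gcongr
          exact cover_compl.vertexCoverNum_le
      _ = Nat.card V := by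
          rw [add_comm, Set.encard_add_encard_compl, Set.encard_univ, ENat.card_eq_coe_natCard]
  · obtain ⟨C, hcard, hC⟩ := SimpleGraph.vertexCoverNum_exists G
    have indep_compl : G.IsIndepSet (Cᶜ.toFinite.toFinset : Set V) := by
      rwa [Set.Finite.coe_toFinset, SimpleGraph.isIndepSet_compl_iff_isVertexCover]
    calc (Nat.card V : ℕ∞) = C.encard + Cᶜ.encard := by
          rw [Set.encard_add_encard_compl, Set.encard_univ, ENat.card_eq_coe_natCard]
      _ ≤ G.vertexCoverNum + G.indepNum := by
          rw [hcard, Cᶜ.toFinite.encard_eq_coe_toFinset_card]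
          gcongr
          exact indep_compl.card_le_indepNum

end VertexCover

namespace StarDecomposition

open Finset

variable {V : Type*} {G : SimpleGraph V}

theorem coe_biUnion_stars (D : StarDecomposition G) :
    (D.stars.biUnion Prod.snd : Set (Sym2 V)) = G.edgeSet := by
  ext e
  simp only [mem_coe, mem_biUnion]
  exact ⟨fun ⟨p, hp, he⟩ => D.edges_sub p hp e he, D.covers e⟩

theorem sum_card_stars (D : StarDecomposition G) :
    ∑ p ∈ D.stars, #p.2 = G.edgeSet.ncard := by
  rw [← D.coe_biUnion_stars, Set.ncard_coe_finset,
    card_biUnion fun p hp q hq => D.disj p hp q hq]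

theorem totalStorage_eq_ncard_edgeSet_add_card_stars [Fintype V] (D : StarDecomposition G) :
    D.totalStorage = G.edgeSet.ncard + #D.stars := by
  calc D.totalStorage = ∑ u, #{p ∈ D.stars | u ∈ p.2.biUnion Sym2.toFinset} := by
        simp only [totalStorage, storage, mem_biUnion, Sym2.mem_toFinset]
    _ = ∑ p ∈ D.stars, #(p.2.biUnion Sym2.toFinset) := by
        simpa only [bipartiteAbove, bipartiteBelow, filter_univ_mem] using
          sum_card_bipartiteAbove_eq_sum_card_bipartiteBelow (s := univ) (t := D.stars)
            fun u p => u ∈ p.2.biUnion Sym2.toFinset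
    _ = ∑ p ∈ D.stars, (#p.2 + 1) :=
        sum_congr rfl fun p hp => card_biUnion_toFinset_of_forall_mem (D.star_nonempty p hp)
          (D.centre_mem p hp) fun e he => G.not_isDiag_of_mem_edgeSet (D.edges_sub p hp e he)
    _ = G.edgeSet.ncard + #D.stars := by
        rw [sum_add_distrib, D.sum_card_stars, ← card_eq_sum_ones]

theorem isVertexCover_centres (D : StarDecomposition G) :
    G.IsVertexCover (D.stars.image Prod.fst : Set V) := by
  intro u v huv
  obtain ⟨p, hp, he⟩ := D.covers s(u, v) huv
  have centre_mem_image := mem_coe.2 (mem_image_of_mem Prod.fst hp)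
  rcases Sym2.mem_iff.1 (D.centre_mem p hp _ he) with rfl | rfl
  exacts [.inl centre_mem_image, .inr centre_mem_image]

theorem vertexCoverNum_le_card_stars (D : StarDecomposition G) :
    G.vertexCoverNum ≤ #D.stars :=
  calc G.vertexCoverNum ≤ #(D.stars.image Prod.fst) := by
        simpa only [Set.encard_coe_eq_coe_finsetCard] using
          D.isVertexCover_centres.vertexCoverNum_le
    _ ≤ #D.stars := mod_cast card_image_le

end StarDecomposition

namespace EdgeOrientation

open Finset

variable {V : Type*} {G : SimpleGraph V}

theorem exists_forall_head_mem {C : Set V} (hC : G.IsVertexCover C) :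
    ∃ o : EdgeOrientation G, ∀ e ∈ G.edgeSet, o.head e ∈ C := by
  have exists_endpoint (e : Sym2 V) : ∃ c, e ∈ G.edgeSet → c ∈ e ∧ c ∈ C := by
    induction e with | _ u v
    by_cases hu : u ∈ C
    · exact ⟨u, fun _ => ⟨Sym2.mem_mk_left u v, hu⟩⟩
    · exact ⟨v, fun huv => ⟨Sym2.mem_mk_right u v, (hC huv).resolve_left hu⟩⟩
  choose head hhead using exists_endpoint
  exact ⟨⟨head, fun e he => (hhead e he).1⟩, fun e he => (hhead e he).2⟩

/-- The decomposition of a graph with finitely many edges into the stars obtained by grouping the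
edges according to their heads. The stars are indexed by edges rather than by vertices, so that they
are automatically nonempty; edges with the same head yield the same star. -/
noncomputable def starDecomposition (o : EdgeOrientation G) (hG : G.edgeSet.Finite) :
    StarDecomposition G where
  stars := hG.toFinset.image fun e => (o.head e, {e' ∈ hG.toFinset | o.head e' = o.head e})
  star_nonempty := forall_mem_image.2 fun e he => ⟨e, mem_filter.2 ⟨he, rfl⟩⟩
  centre_mem := forall_mem_image.2 fun e _ e' he' => by
    obtain ⟨hmem, hhead⟩ := mem_filter.1 he'
    exact hhead ▸ o.head_mem e' (hG.mem_toFinset.1 hmem)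
  edges_sub := forall_mem_image.2 fun e _ e' he' => hG.mem_toFinset.1 (mem_filter.1 he').1
  disj := forall_mem_image.2 fun e _ => forall_mem_image.2 fun f _ hne =>
    disjoint_filter.2 fun e' _ he hf => hne (by simp only [← he, ← hf])
  covers e he := ⟨_, mem_image_of_mem _ (hG.mem_toFinset.2 he),
    mem_filter.2 ⟨hG.mem_toFinset.2 he, rfl⟩⟩

theorem card_stars_starDecomposition (o : EdgeOrientation G) (hG : G.edgeSet.Finite) :
    #(o.starDecomposition hG).stars = (o.head '' G.edgeSet).ncard := by
  have stars_eq : (o.starDecomposition hG).stars =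
      (hG.toFinset.image o.head).image fun c => (c, {e ∈ hG.toFinset | o.head e = c}) := by
    rw [image_image]
    rfl
  rw [stars_eq, card_image_of_injective _ fun _ _ h => congrArg Prod.fst h,
    ← Set.ncard_coe_finset, coe_image, hG.coe_toFinset]

end EdgeOrientation

section MinStars

open Finset

variable {V : Type*} {G : SimpleGraph V}

theorem minStars_le_card_stars (D : StarDecomposition G) : minStars G ≤ #D.stars :=
  Nat.sInf_le ⟨D, rfl⟩

theorem exists_card_stars_eq_minStars (hG : G.edgeSet.Finite) :
    ∃ D : StarDecomposition G, #D.stars = minStars G := by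
  obtain ⟨o, -⟩ := EdgeOrientation.exists_forall_head_mem (G := G) SimpleGraph.isVertexCover_univ
  exact Nat.sInf_mem (s := {k | ∃ D : StarDecomposition G, #D.stars = k})
    ⟨_, o.starDecomposition hG, rfl⟩

theorem minStars_eq_vertexCoverNum (hG : G.edgeSet.Finite) :
    (minStars G : ℕ∞) = G.vertexCoverNum := by
  apply le_antisymm
  · obtain ⟨C, hcard, hC⟩ := SimpleGraph.vertexCoverNum_exists G
    obtain ⟨o, ho⟩ := EdgeOrientation.exists_forall_head_mem hC
    calc (minStars G : ℕ∞) ≤ #(o.starDecomposition hG).stars :=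
          mod_cast minStars_le_card_stars _
      _ = (o.head '' G.edgeSet).encard := by
          rw [o.card_stars_starDecomposition hG, (hG.image o.head).cast_ncard_eq]
      _ ≤ C.encard := Set.encard_le_encard (Set.image_subset_iff.2 ho)
      _ = G.vertexCoverNum := hcard
  · obtain ⟨D, hD⟩ := exists_card_stars_eq_minStars hG
    exact hD ▸ D.vertexCoverNum_le_card_stars

theorem minStars_add_indepNum [Finite V] (G : SimpleGraph V) :
    minStars G + indepNum G = Nat.card V := by
  have h := vertexCoverNum_add_indepNum G
  rw [← minStars_eq_vertexCoverNum G.edgeSet.toFinite, ← indepNum_eq_simpleGraph_indepNum] at h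
  exact_mod_cast h

theorem SStar_eq_ncard_edgeSet_add_minStars [Fintype V] (G : SimpleGraph V) :
    SStar G = G.edgeSet.ncard + minStars G := by
  obtain ⟨D, hD⟩ := exists_card_stars_eq_minStars G.edgeSet.toFinite
  have hstorage : D.totalStorage = G.edgeSet.ncard + minStars G := by
    rw [D.totalStorage_eq_ncard_edgeSet_add_card_stars, hD]
  refine IsLeast.csInf_eq ⟨⟨D, hstorage⟩, ?_⟩
  rintro _ ⟨D', rfl⟩
  rw [D'.totalStorage_eq_ncard_edgeSet_add_card_stars]
  gcongr
  exact minStars_le_card_stars D'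

end MinStars

/-- `S*(G) = n + ε - α(G)`: the minimum total storage over all
edge-decompositions of `G` into stars. -/
theorem SStar_eq {V : Type*} [Fintype V] (G : SimpleGraph V) :
    SStar G = Fintype.card V + G.edgeSet.ncard - indepNum G := by
  rw [SStar_eq_ncard_edgeSet_add_minStars, ← Nat.card_eq_fintype_card, ← minStars_add_indepNum G]
  omega
end

section
/- Let G be a finite simple graph on at least one vertex that is regular of odd degree d ≥ 3. Then S_max*(G) = (d+3)/2, where S_max*(G) is the minimum over all edge-decompositions of G into stars of the maximum storage of a vertex. -/
open Classical

/-!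
The stars of out-edges of an orientation form a decomposition, and a decomposition orients every
edge from centre to leaf; in both cases the indegree of a vertex counts the stars in which it is a
leaf. In the decomposition into out-stars each vertex is the centre of at most one star, so
`S_max* ≤ MMI + 1`. In an arbitrary decomposition the storage of a vertex exceeds its indegree if
the vertex is a centre, and equals its degree otherwise; hence `S_max* = MMI + 1` as soon as all
degrees exceed `MMI`. For a `d`-regular graph `MMI = ⌈d / 2⌉`: averaging the indegrees gives the
lower bound, and Hall's theorem, applied to edges choosing one of `⌈d / 2⌉` slots at one of their
ends, gives the upper bound.
-/

section

open Finset

variable {V : Type*} {G : SimpleGraph V}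

namespace EdgeOrientation

/-- The orientation in which each edge `e` has head `f e`. An `EdgeOrientation` also assigns a
vertex to every non-edge; an arbitrary endpoint is used there. -/
noncomputable def ofEdges (f : G.edgeSet → V) (hf : ∀ e, f e ∈ e.1) : EdgeOrientation G where
  head := Function.extend Subtype.val f fun e => (Quot.out e).1
  head_mem e he := by
    rw [Subtype.val_injective.extend_apply f _ ⟨e, he⟩]
    exact hf ⟨e, he⟩

theorem head_ofEdges (f : G.edgeSet → V) (hf : ∀ e, f e ∈ e.1) (e : G.edgeSet) :
    (ofEdges f hf).head e = f e :=
  Subtype.val_injective.extend_apply f (fun e => (Quot.out e).1) e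

theorem indeg_ofEdges (f : G.edgeSet → V) (hf : ∀ e, f e ∈ e.1) (v : V) :
    (ofEdges f hf).indeg v = {e | f e = v}.ncard := by
  rw [indeg, ← Set.ncard_image_of_injective _ Subtype.val_injective]
  congr 1
  ext e
  constructor
  · rintro ⟨he, hv⟩
    exact ⟨⟨e, he⟩, (head_ofEdges f hf ⟨e, he⟩).symm.trans hv, rfl⟩
  · rintro ⟨e, hv, rfl⟩
    exact ⟨e.2, (head_ofEdges f hf e).trans hv⟩

theorem indeg_eq_card [Fintype G.edgeSet] (o : EdgeOrientation G) (v : V) :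
    o.indeg v = #{e ∈ G.edgeFinset | o.head e = v} := by
  rw [indeg, ← Set.ncard_coe_finset]
  simp only [coe_filter, SimpleGraph.mem_edgeFinset]

theorem sum_indeg [Fintype V] [Fintype G.edgeSet] (o : EdgeOrientation G) :
    ∑ v, o.indeg v = #G.edgeFinset := by
  simp only [indeg_eq_card]
  exact (card_eq_sum_card_fiberwise fun e _ => mem_coe.2 (mem_univ (o.head e))).symm

section OutStars

variable [Finite V] (o : EdgeOrientation G)

/-- The edges leaving `v`, that is, the edges counted by `o.outdeg v`. -/
noncomputable def outEdges (v : V) : Finset (Sym2 V) :=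
  (Set.toFinite {e | e ∈ G.edgeSet ∧ v ∈ e ∧ o.head e ≠ v}).toFinset

variable {o} {e : Sym2 V} {u v : V}

theorem mem_outEdges : e ∈ o.outEdges v ↔ e ∈ G.edgeSet ∧ v ∈ e ∧ o.head e ≠ v :=
  Set.Finite.mem_toFinset _

theorem eq_head_of_mem_outEdges (he : e ∈ o.outEdges v) (hu : u ∈ e) (huv : u ≠ v) :
    o.head e = u := by
  obtain ⟨heG, hv, hne⟩ := mem_outEdges.1 he
  have he_eq : e = s(u, v) := (Sym2.mem_and_mem_iff huv).1 ⟨hu, hv⟩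
  have hmem : o.head e ∈ s(u, v) := he_eq ▸ o.head_mem e heG
  exact (Sym2.mem_iff.1 hmem).resolve_right hne

theorem eq_of_mem_outEdges (hu : e ∈ o.outEdges u) (hv : e ∈ o.outEdges v) : u = v := by
  by_contra huv
  obtain ⟨-, hue, hne⟩ := mem_outEdges.1 hu
  exact hne (eq_head_of_mem_outEdges hv hue huv)

theorem exists_mem_outEdges (o : EdgeOrientation G) (he : e ∈ G.edgeSet) :
    ∃ v, e ∈ o.outEdges v := by
  have hhead := o.head_mem e he
  refine ⟨Sym2.Mem.other hhead, mem_outEdges.2 ⟨he, Sym2.other_mem hhead, ?_⟩⟩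
  exact (Sym2.other_ne (G.not_isDiag_of_mem_edgeSet he) hhead).symm

/-- The decomposition into the stars of out-edges of an orientation, one for each vertex of positive
outdegree. -/
noncomputable def outStars (o : EdgeOrientation G) : StarDecomposition G where
  stars := (Set.toFinite {p | p.2 = o.outEdges p.1 ∧ p.2.Nonempty}).toFinset
  star_nonempty p hp := ((Set.Finite.mem_toFinset _).1 hp).2
  centre_mem p hp e he := by
    rw [((Set.Finite.mem_toFinset _).1 hp).1] at he
    exact (mem_outEdges.1 he).2.1
  edges_sub p hp e he := by
    rw [((Set.Finite.mem_toFinset _).1 hp).1] at he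
    exact (mem_outEdges.1 he).1
  disj p hp q hq hpq := by
    obtain ⟨hp_eq, -⟩ := (Set.Finite.mem_toFinset _).1 hp
    obtain ⟨hq_eq, -⟩ := (Set.Finite.mem_toFinset _).1 hq
    refine disjoint_left.2 fun e hpe hqe => hpq ?_
    have hcentre : p.1 = q.1 := eq_of_mem_outEdges (hp_eq ▸ hpe) (hq_eq ▸ hqe)
    exact Prod.ext hcentre (by rw [hp_eq, hq_eq, hcentre])
  covers e he := by
    obtain ⟨v, hv⟩ := o.exists_mem_outEdges he
    exact ⟨(v, o.outEdges v), (Set.Finite.mem_toFinset _).2 ⟨rfl, e, hv⟩, hv⟩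

theorem snd_eq_of_mem_outStars {p : V × Finset (Sym2 V)} (hp : p ∈ o.outStars.stars) :
    p.2 = o.outEdges p.1 :=
  ((Set.Finite.mem_toFinset _).1 hp).1

end OutStars

end EdgeOrientation

namespace StarDecomposition

variable (D : StarDecomposition G) {p q : V × Finset (Sym2 V)} {e : Sym2 V} {v : V}

theorem eq_of_mem_of_mem (hp : p ∈ D.stars) (hq : q ∈ D.stars) (hpe : e ∈ p.2) (hqe : e ∈ q.2) :
    p = q := by
  by_contra hpq
  exact disjoint_left.1 (D.disj p hp q hq hpq) hpe hqe

theorem leafCount_le_storage (v : V) : D.leafCount v ≤ D.storage v :=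
  card_le_card <| monotone_filter_right _ fun _ _ h => h.2

theorem leafCount_lt_storage (hp : p ∈ D.stars) : D.leafCount p.1 < D.storage p.1 := by
  obtain ⟨e, he⟩ := D.star_nonempty p hp
  refine card_lt_card <| (ssubset_iff_of_subset <| monotone_filter_right _ fun _ _ h => h.2).2
    ⟨p, mem_filter.2 ⟨hp, e, he, D.centre_mem p hp e he⟩, fun h => ?_⟩
  exact (mem_filter.1 h).2.1 rfl

theorem card_le_leafCount {s : Finset (Sym2 V)} (hsG : ∀ e ∈ s, e ∈ G.edgeSet)
    (hsv : ∀ e ∈ s, v ∈ e) (hcentre : ∀ e ∈ s, ∀ p ∈ D.stars, e ∈ p.2 → p.1 ≠ v) :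
    #s ≤ D.leafCount v := by
  refine card_le_card_of_forall_subsingleton (fun e p => e ∈ p.2) (fun e he => ?_) fun p hp => ?_
  · obtain ⟨p, hp, hpe⟩ := D.covers e (hsG e he)
    exact ⟨p, mem_filter.2 ⟨hp, (hcentre e he p hp hpe).symm, e, hpe, hsv e he⟩, hpe⟩
  · rintro e ⟨he, hpe⟩ e' ⟨he', hpe'⟩
    obtain ⟨hp, hpv, -⟩ := mem_filter.1 hp
    have eq_mk {e : Sym2 V} (he : e ∈ s) (hpe : e ∈ p.2) : e = s(v, p.1) :=
      (Sym2.mem_and_mem_iff hpv).1 ⟨hsv e he, D.centre_mem p hp e hpe⟩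
    rw [eq_mk he hpe, eq_mk he' hpe']

theorem degree_le_leafCount [Fintype (G.neighborSet v)] (hv : ∀ p ∈ D.stars, p.1 ≠ v) :
    G.degree v ≤ D.leafCount v := by
  rw [← G.card_incidenceFinset_eq_degree]
  exact D.card_le_leafCount (fun e he => ((G.mem_incidenceFinset v e).1 he).1)
    (fun e he => ((G.mem_incidenceFinset v e).1 he).2) fun _ _ p hp _ => hv p hp

theorem exists_leaf (he : e ∈ G.edgeSet) : ∃ v ∈ e, ∀ p ∈ D.stars, e ∈ p.2 → p.1 ≠ v := by
  obtain ⟨p, hp, hpe⟩ := D.covers e he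
  have hcentre := D.centre_mem p hp e hpe
  refine ⟨Sym2.Mem.other hcentre, Sym2.other_mem hcentre, fun q hq hqe => ?_⟩
  rw [D.eq_of_mem_of_mem hq hp hqe hpe]
  exact (Sym2.other_ne (G.not_isDiag_of_mem_edgeSet he) hcentre).symm

/-- The orientation of each edge from the centre of its star to the leaf. -/
noncomputable def leafOrientation : EdgeOrientation G :=
  .ofEdges (fun e => (D.exists_leaf e.2).choose) fun e => (D.exists_leaf e.2).choose_spec.1

theorem centre_ne_head_leafOrientation (hp : p ∈ D.stars) (he : e ∈ p.2) :
    p.1 ≠ D.leafOrientation.head e := by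
  have heG := D.edges_sub p hp e he
  rw [leafOrientation, EdgeOrientation.head_ofEdges _ _ ⟨e, heG⟩]
  exact (D.exists_leaf heG).choose_spec.2 p hp he

theorem indeg_leafOrientation_le [Finite V] (v : V) :
    D.leafOrientation.indeg v ≤ D.leafCount v := by
  have := Fintype.ofFinite V
  rw [EdgeOrientation.indeg_eq_card]
  refine D.card_le_leafCount ?_ ?_ ?_ <;> intro e he <;>
    obtain ⟨heG, rfl⟩ := mem_filter.1 he
  · exact SimpleGraph.mem_edgeFinset.1 heG
  · exact D.leafOrientation.head_mem e (SimpleGraph.mem_edgeFinset.1 heG)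
  · exact fun p hp hpe => D.centre_ne_head_leafOrientation hp hpe

end StarDecomposition

namespace EdgeOrientation

variable [Finite V] (o : EdgeOrientation G) (v : V)

theorem leafCount_outStars_le : o.outStars.leafCount v ≤ o.indeg v := by
  have := Fintype.ofFinite V
  rw [indeg_eq_card]
  refine card_le_card_of_forall_subsingleton (fun p e => e ∈ p.2) (fun p hp => ?_) fun e _ => ?_
  · obtain ⟨hp, hne, e, hpe, hve⟩ := mem_filter.1 hp
    have hout : e ∈ o.outEdges p.1 := snd_eq_of_mem_outStars hp ▸ hpe
    have hedge := SimpleGraph.mem_edgeFinset.2 (o.outStars.edges_sub p hp e hpe)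
    exact ⟨e, mem_filter.2 ⟨hedge, eq_head_of_mem_outEdges hout hve hne⟩, hpe⟩
  · rintro p ⟨hp, hpe⟩ q ⟨hq, hqe⟩
    exact o.outStars.eq_of_mem_of_mem (mem_filter.1 hp).1 (mem_filter.1 hq).1 hpe hqe

theorem storage_outStars_le : o.outStars.storage v ≤ o.indeg v + 1 := by
  have hsub : {p ∈ o.outStars.stars | ∃ e ∈ p.2, v ∈ e} ⊆
      insert (v, o.outEdges v) {p ∈ o.outStars.stars | v ≠ p.1 ∧ ∃ e ∈ p.2, v ∈ e} := by
    intro p hpv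
    obtain ⟨hp, hv⟩ := mem_filter.1 hpv
    by_cases hcentre : v = p.1
    · rw [hcentre]
      exact mem_insert.2 (.inl (Prod.ext rfl (snd_eq_of_mem_outStars hp)))
    · exact mem_insert_of_mem (mem_filter.2 ⟨hp, hcentre, hv⟩)
  calc o.outStars.storage v
      ≤ o.outStars.leafCount v + 1 := (card_le_card hsub).trans (card_insert_le _ _)
    _ ≤ o.indeg v + 1 := Nat.add_le_add_right (o.leafCount_outStars_le v) 1

end EdgeOrientation

theorem card_mul_two_le_card_biUnion_mul [G.LocallyFinite] {Δ : ℕ} (hΔ : ∀ v, G.degree v ≤ Δ)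
    (s : Finset G.edgeSet) : #s * 2 ≤ #(s.biUnion fun e => e.1.toFinset) * Δ := by
  refine card_mul_le_card_mul (fun e v => v ∈ e.1) (fun e he => ?_) fun v _ => ?_
  · rw [← Sym2.card_toFinset_of_not_isDiag e.1 (G.not_isDiag_of_mem_edgeSet e.2)]
    refine card_le_card fun v hv => (mem_bipartiteAbove _).2 ⟨?_, Sym2.mem_toFinset.1 hv⟩
    exact mem_biUnion.2 ⟨e, he, hv⟩
  · refine le_trans ?_ (hΔ v)
    rw [← G.card_incidenceFinset_eq_degree]
    refine card_le_card_of_injOn Subtype.val (fun e he => ?_) Subtype.val_injective.injOn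
    have hve : v ∈ e.1 := ((mem_bipartiteBelow _).1 he).2
    exact (G.mem_incidenceFinset v e).2 ⟨e.2, hve⟩

theorem exists_indeg_le_of_degree_le [G.LocallyFinite] {m : ℕ} (hm : ∀ v, G.degree v ≤ 2 * m) :
    ∃ o : EdgeOrientation G, ∀ v, o.indeg v ≤ m := by
  let slots (e : G.edgeSet) : Finset (V × Fin m) := e.1.toFinset ×ˢ univ
  have hall (s : Finset G.edgeSet) : #s ≤ #(s.biUnion slots) := by
    have hprod : s.biUnion slots = (s.biUnion fun e => e.1.toFinset) ×ˢ univ := by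
      ext x
      simp only [slots, mem_biUnion, mem_product, mem_univ, and_true]
    have hcount := card_mul_two_le_card_biUnion_mul hm s
    rw [hprod, card_product, card_univ, Fintype.card_fin]
    linarith
  obtain ⟨slot, hinj, hslot⟩ := (all_card_le_biUnion_card_iff_exists_injective slots).1 hall
  refine ⟨.ofEdges (fun e => (slot e).1) fun e =>
    Sym2.mem_toFinset.1 (mem_product.1 (hslot e)).1, fun v => ?_⟩
  rw [EdgeOrientation.indeg_ofEdges]
  calc {e | (slot e).1 = v}.ncard
      ≤ (Set.univ : Set (Fin m)).ncard := by
        refine Set.ncard_le_ncard_of_injOn (fun e => (slot e).2) (fun _ _ => Set.mem_univ _) ?_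
        exact fun e he e' he' h => hinj (Prod.ext (he.trans he'.symm) h)
    _ = m := by rw [Set.ncard_univ, Nat.card_fin]

theorem exists_indeg_le_MMI [Finite V] (G : SimpleGraph V) :
    ∃ o : EdgeOrientation G, ∀ v, o.indeg v ≤ MMI G := by
  have := Fintype.ofFinite V
  have hne : {k | ∃ o : EdgeOrientation G, ∀ v, o.indeg v ≤ k}.Nonempty :=
    ⟨G.maxDegree, exists_indeg_le_of_degree_le fun v =>
      (G.degree_le_maxDegree v).trans (Nat.le_mul_of_pos_left _ two_pos)⟩
  exact Nat.sInf_mem hne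

theorem exists_MMI_le_indeg [Nonempty V] (o : EdgeOrientation G) : ∃ v, MMI G ≤ o.indeg v := by
  by_contra! hlt
  have hle : MMI G ≤ MMI G - 1 := Nat.sInf_le ⟨o, fun v => Nat.le_sub_one_of_lt (hlt v)⟩
  have hpos : 0 < MMI G := Nat.zero_lt_of_lt (hlt (Classical.arbitrary V))
  omega

theorem card_edgeFinset_le_card_mul_MMI [Fintype V] [Fintype G.edgeSet] :
    #G.edgeFinset ≤ Fintype.card V * MMI G := by
  obtain ⟨o, ho⟩ := exists_indeg_le_MMI G
  calc #G.edgeFinset = ∑ v, o.indeg v := o.sum_indeg.symm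
    _ ≤ #univ • MMI G := sum_le_card_nsmul _ _ _ fun v _ => ho v
    _ = Fintype.card V * MMI G := rfl

theorem MMI_eq_of_isRegularOfDegree [Fintype V] [Nonempty V] [DecidableRel G.Adj] {d : ℕ}
    (hreg : G.IsRegularOfDegree d) : MMI G = (d + 1) / 2 := by
  have hupper : MMI G ≤ (d + 1) / 2 :=
    Nat.sInf_le (exists_indeg_le_of_degree_le fun v => by rw [hreg v]; omega)
  have hlower : d ≤ 2 * MMI G := by
    refine Nat.le_of_mul_le_mul_left ?_ (Fintype.card_pos (α := V))
    calc Fintype.card V * d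
      _ = ∑ v, G.degree v := by
        simp only [hreg.degree_eq, sum_const, card_univ, smul_eq_mul]
      _ = 2 * #G.edgeFinset := G.sum_degrees_eq_twice_card_edges
      _ ≤ 2 * (Fintype.card V * MMI G) := Nat.mul_le_mul_left 2 card_edgeFinset_le_card_mul_MMI
      _ = Fintype.card V * (2 * MMI G) := by ring
  omega

theorem exists_storage_le_MMI_add_one [Finite V] (G : SimpleGraph V) :
    ∃ D : StarDecomposition G, ∀ v, D.storage v ≤ MMI G + 1 := by
  obtain ⟨o, ho⟩ := exists_indeg_le_MMI G
  exact ⟨o.outStars, fun v => (o.storage_outStars_le v).trans (Nat.add_le_add_right (ho v) 1)⟩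

theorem SmaxStar_eq_MMI_add_one [Finite V] [Nonempty V] [G.LocallyFinite]
    (hdeg : ∀ v, MMI G < G.degree v) : SmaxStar G = MMI G + 1 := by
  refine le_antisymm (Nat.sInf_le (exists_storage_le_MMI_add_one G)) ?_
  have hne : {k | ∃ D : StarDecomposition G, ∀ v, D.storage v ≤ k}.Nonempty :=
    ⟨_, exists_storage_le_MMI_add_one G⟩
  obtain ⟨D, hD⟩ : ∃ D : StarDecomposition G, ∀ v, D.storage v ≤ SmaxStar G := Nat.sInf_mem hne
  obtain ⟨v, hv⟩ := exists_MMI_le_indeg D.leafOrientation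
  by_cases hcentre : ∃ p ∈ D.stars, p.1 = v
  · obtain ⟨p, hp, rfl⟩ := hcentre
    calc MMI G ≤ D.leafOrientation.indeg p.1 := hv
      _ ≤ D.leafCount p.1 := D.indeg_leafOrientation_le p.1
      _ < D.storage p.1 := D.leafCount_lt_storage hp
      _ ≤ SmaxStar G := hD p.1
  · push Not at hcentre
    calc MMI G < G.degree v := hdeg v
      _ ≤ D.leafCount v := D.degree_le_leafCount hcentre
      _ ≤ D.storage v := D.leafCount_le_storage v
      _ ≤ SmaxStar G := hD v

end

theorem SmaxStar_regular_odd_general {V : Type*} [Fintype V] [Nonempty V] (G : SimpleGraph V)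
    [DecidableRel G.Adj] (d : ℕ) (hd : 2 ≤ d) (hreg : G.IsRegularOfDegree d) :
    SmaxStar G = (d + 3) / 2 := by
  have hMMI : MMI G = (d + 1) / 2 := MMI_eq_of_isRegularOfDegree hreg
  have hdeg (v : V) : MMI G < G.degree v := by
    rw [hMMI, hreg v]
    omega
  rw [SmaxStar_eq_MMI_add_one hdeg, hMMI]
  omega

/-- If `G` is regular of odd degree `d ≥ 3`, then
`S_max*(G) = (d+3)/2`. -/
theorem SmaxStar_regular_odd {V : Type*} [Fintype V] [Nonempty V] (G : SimpleGraph V)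
    [DecidableRel G.Adj] (d : ℕ) (hd : Odd d) (hd3 : 3 ≤ d)
    (hreg : G.IsRegularOfDegree d) :
    SmaxStar G = (d + 3) / 2 :=
  SmaxStar_regular_odd_general G d (by omega) hreg
end
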